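/- Let a, b, ℓ > 0. The expected number of tiles of the a×b grid visited by a uniformly random segment of length ℓ equals 2·ℓ·(1/a + 1/b)/π + 1; that is, ∫_Ω (number of visited tiles of S_ω) dP(ω) = 2·ℓ·(1/a + 1/b)/π + 1. -/

import Mathlib

open Set

/-- Interior of the tile `T(k,l)` of the `a×b` grid. -/
noncomputable def tileInt (a b : ℝ) (k l : ℤ) : Set (ℝ × ℝ) :=
  Set.Ioo ((k : ℝ) * a) (((k : ℝ) + 1) * a) ×ˢ Set.Ioo ((l : ℝ) * b) (((l : ℝ) + 1) * b)

/-- Number of tiles of the `a×b` grid visited by the closed segment with endpoints `p`, `q`. -/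
noncomputable def visitCount (a b : ℝ) (p q : ℝ × ℝ) : ℕ :=
  Set.ncard {kl : ℤ × ℤ | (segment ℝ p q ∩ tileInt a b kl.1 kl.2).Nonempty}

/-- Normalized width of the discrete bounding rectangle of the segment with endpoints `p`, `q`. -/
noncomputable def normWidth (a : ℝ) (p q : ℝ × ℝ) : ℤ :=
  ⌈max p.1 q.1 / a⌉ - ⌊min p.1 q.1 / a⌋

/-- Normalized height of the discrete bounding rectangle of the segment with endpoints `p`, `q`. -/
noncomputable def normHeight (b : ℝ) (p q : ℝ × ℝ) : ℤ :=
  ⌈max p.2 q.2 / b⌉ - ⌊min p.2 q.2 / b⌋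

/-- Euclidean length of the segment with endpoints `p`, `q`. -/
noncomputable def segLen (p q : ℝ × ℝ) : ℝ :=
  Real.sqrt ((p.1 - q.1) ^ 2 + (p.2 - q.2) ^ 2)

/-- `maxTiles a b ℓ` : maximum number of tiles of the `a×b` grid visited by a segment of length `ℓ`. -/
noncomputable def maxTiles (a b ℓ : ℝ) : ℕ :=
  sSup {n : ℕ | ∃ p q : ℝ × ℝ, segLen p q = ℓ ∧ visitCount a b p q = n}

/-- `infLen a b N` : infimum of lengths of segments visiting at least `N` tiles of the `a×b` grid. -/
noncomputable def infLen (a b : ℝ) (N : ℕ) : ℝ :=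
  sInf {ℓ : ℝ | 0 < ℓ ∧ ∃ p q : ℝ × ℝ, segLen p q = ℓ ∧ N ≤ visitCount a b p q}

/-- `minIntLen N` : minimum positive integer length of a segment visiting at least `N` tiles
of the unit square grid. -/
noncomputable def minIntLen (N : ℕ) : ℕ :=
  sInf {L : ℕ | 1 ≤ L ∧ ∃ p q : ℝ × ℝ, segLen p q = (L : ℝ) ∧ N ≤ visitCount 1 1 p q}

open MeasureTheory

/-- Uniform probability measure on `Ω = [0,a) × [0,b) × [0,2π)`. -/
noncomputable def unifP (a b : ℝ) : Measure (ℝ × ℝ × ℝ) :=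
  (ENNReal.ofReal (2 * Real.pi * a * b))⁻¹ •
    (volume.restrict (Set.Ico (0:ℝ) a ×ˢ Set.Ico (0:ℝ) b ×ˢ Set.Ico (0:ℝ) (2 * Real.pi)))

/-- First endpoint of the random segment determined by `ω = (x₁, y₁, θ)`. -/
noncomputable def segPt1 (ω : ℝ × ℝ × ℝ) : ℝ × ℝ := (ω.1, ω.2.1)

/-- Second endpoint of the random segment of length `ℓ` determined by `ω = (x₁, y₁, θ)`. -/
noncomputable def segPt2 (ℓ : ℝ) (ω : ℝ × ℝ × ℝ) : ℝ × ℝ :=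
  (ω.1 + ℓ * Real.cos ω.2.2, ω.2.1 + ℓ * Real.sin ω.2.2)

/-!
The count is the sum over `(k, l)` of the indicators that the tile `(k, l)` is visited. For a
fixed displacement `v = (u, w)` these events, as sets of starting points, are the translates by
`(k * a, l * b)` of a single set: the open tile `(0, a) × (0, b)` swept along `-v`. Since the
lattice translates of `[0, a) × [0, b)` partition the plane, the expected count over starting
points in that box is the area of the swept tile divided by `a * b`. The area is
`a * b + |u| * b + |w| * a`, found by slicing: the slice over `x` is the Minkowski sum of the
interval `(0, b)` and `-w` times the interval of times at which `x + t * u` lies in `(0, a)`, and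
lengths of intervals add under Minkowski sums. Averaging `|cos θ|` and `|sin θ|` over a period
gives the factor `2 / π`.
-/

open scoped Pointwise ENNReal

section Intervals

variable {s t : Set ℝ}

theorem volume_eq_ofReal_sSup_sub_sInf (hs : s.OrdConnected) (hne : s.Nonempty)
    (hbdd : Bornology.IsBounded s) : volume s = ENNReal.ofReal (sSup s - sInf s) := by
  apply le_antisymm
  · rw [← Real.volume_Icc]
    exact measure_mono (subset_Icc_csInf_csSup hbdd.bddBelow hbdd.bddAbove)
  · rw [← Real.volume_Ioo]
    refine measure_mono fun x ⟨hinf, hsup⟩ ↦ ?_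
    obtain ⟨y, hy, hyx⟩ := exists_lt_of_csInf_lt hne hinf
    obtain ⟨z, hz, hxz⟩ := exists_lt_of_lt_csSup hne hsup
    exact hs.out hy hz ⟨hyx.le, hxz.le⟩

theorem volume_add_of_ordConnected (hs : s.OrdConnected) (hs_ne : s.Nonempty)
    (hs_bdd : Bornology.IsBounded s) (ht : t.OrdConnected) (ht_ne : t.Nonempty)
    (ht_bdd : Bornology.IsBounded t) : volume (s + t) = volume s + volume t := by
  have hst : (s + t).OrdConnected := (hs.convex.add ht.convex).ordConnected
  rw [volume_eq_ofReal_sSup_sub_sInf hst (hs_ne.add ht_ne) (hs_bdd.add ht_bdd),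
    volume_eq_ofReal_sSup_sub_sInf hs hs_ne hs_bdd,
    volume_eq_ofReal_sSup_sub_sInf ht ht_ne ht_bdd,
    csSup_add hs_ne hs_bdd.bddAbove ht_ne ht_bdd.bddAbove,
    csInf_add hs_ne hs_bdd.bddBelow ht_ne ht_bdd.bddBelow, add_sub_add_comm,
    ENNReal.ofReal_add (sub_nonneg.2 (Real.sInf_le_sSup s hs_bdd.bddBelow hs_bdd.bddAbove))
      (sub_nonneg.2 (Real.sInf_le_sSup t ht_bdd.bddBelow ht_bdd.bddAbove))]

theorem volume_add_smul_of_ordConnected (hs : s.OrdConnected) (hs_ne : s.Nonempty)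
    (hs_bdd : Bornology.IsBounded s) (ht : t.OrdConnected) (ht_ne : t.Nonempty)
    (ht_bdd : Bornology.IsBounded t) (c : ℝ) :
    volume (s + c • t) = volume s + ENNReal.ofReal |c| * volume t := by
  rw [volume_add_of_ordConnected hs hs_ne hs_bdd (ht.convex.smul c).ordConnected ht_ne.smul_set
    (ht_bdd.smul₀ c), Measure.addHaar_smul, Module.finrank_self, pow_one]

end Intervals

section TransitTimes

/-- The times `t ∈ [0, 1]` at which the point starting at `x` and moving on the line with constant
velocity `u` is in `A`. -/
def transitTimes (A : Set ℝ) (u x : ℝ) : Set ℝ :=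
  {t | t ∈ Icc 0 1 ∧ x + t * u ∈ A}

variable {A B : Set ℝ}

theorem isBounded_transitTimes (A : Set ℝ) (u x : ℝ) :
    Bornology.IsBounded (transitTimes A u x) :=
  (Metric.isBounded_Icc 0 1).subset fun _ ht ↦ ht.1

theorem ordConnected_transitTimes (hA : A.OrdConnected) (u x : ℝ) :
    (transitTimes A u x).OrdConnected := by
  have hline : transitTimes A u x = Icc 0 1 ∩ AffineMap.lineMap x (x + u) ⁻¹' A := by
    ext t
    simp [transitTimes, AffineMap.lineMap_apply, add_comm]
  rw [hline]
  exact ((convex_Icc 0 1).inter (hA.convex.affine_preimage _)).ordConnected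

theorem setOf_nonempty_transitTimes (A : Set ℝ) (u : ℝ) :
    {x | (transitTimes A u x).Nonempty} = A + (-u) • Icc (0 : ℝ) 1 := by
  ext x
  simp only [mem_add, mem_smul_set, exists_exists_and_eq_and, smul_eq_mul]
  constructor
  · rintro ⟨t, ht, hA⟩
    exact ⟨_, hA, t, ht, by ring⟩
  · rintro ⟨y, hy, t, ht, rfl⟩
    exact ⟨t, ht, by rwa [show y + -u * t + t * u = y by ring]⟩

theorem lintegral_volume_transitTimes (hA : MeasurableSet A) (u : ℝ) :
    ∫⁻ x, volume (transitTimes A u x) = volume A := by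
  have hmeas : MeasurableSet {p : ℝ × ℝ | p.2 ∈ Icc (0 : ℝ) 1 ∧ p.1 + p.2 * u ∈ A} :=
    (measurable_snd measurableSet_Icc).inter
      (hA.preimage (f := fun p : ℝ × ℝ ↦ p.1 + p.2 * u) (by fun_prop))
  have hslice (t : ℝ) : volume {x | t ∈ Icc (0 : ℝ) 1 ∧ x + t * u ∈ A} =
      (Icc (0 : ℝ) 1).indicator (fun _ ↦ volume A) t := by
    by_cases ht : t ∈ Icc (0 : ℝ) 1
    · simp only [ht, true_and, indicator_of_mem]
      exact measure_preimage_add_right volume (t * u) A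
    · simp [ht]
  calc ∫⁻ x, volume (transitTimes A u x)
      = ∫⁻ t, volume {x | t ∈ Icc (0 : ℝ) 1 ∧ x + t * u ∈ A} :=
        (Measure.prod_apply hmeas).symm.trans (Measure.prod_apply_symm hmeas)
    _ = volume A := by
        simp_rw [hslice]
        rw [lintegral_indicator_const measurableSet_Icc]
        simp

theorem preimage_mk_prod_sub_segment (A B : Set ℝ) (v : ℝ × ℝ) (x : ℝ) :
    Prod.mk x ⁻¹' (A ×ˢ B - segment ℝ 0 v) = B + (-v.2) • transitTimes A v.1 x := by
  ext y
  simp only [mem_preimage, mem_sub, mem_add, mem_smul_set, segment_eq_image', mem_image,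
    exists_exists_and_eq_and, smul_eq_mul]
  constructor
  · rintro ⟨⟨x', y'⟩, ⟨hx', hy'⟩, t, ht, heq⟩
    simp only [sub_zero, zero_add, Prod.ext_iff, Prod.fst_sub, Prod.snd_sub, Prod.smul_fst,
      Prod.smul_snd, smul_eq_mul] at heq
    refine ⟨y', hy', t, ⟨ht, ?_⟩, by linarith⟩
    rwa [← heq.1, sub_add_cancel]
  · rintro ⟨y', hy', t, ⟨ht, hA⟩, rfl⟩
    refine ⟨(x + t * v.1, y'), ⟨hA, hy'⟩, t, ht, ?_⟩
    refine Prod.ext ?_ ?_ <;>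
      simp only [sub_zero, zero_add, Prod.fst_sub, Prod.snd_sub, Prod.smul_fst, Prod.smul_snd,
        smul_eq_mul] <;> ring

theorem volume_add_smul_transitTimes (hA : A.OrdConnected) (hB : B.OrdConnected)
    (hB_ne : B.Nonempty) (hB_bdd : Bornology.IsBounded B) (u w x : ℝ) :
    volume (B + w • transitTimes A u x) =
      {x | (transitTimes A u x).Nonempty}.indicator (fun _ ↦ volume B) x +
        ENNReal.ofReal |w| * volume (transitTimes A u x) := by
  rcases (transitTimes A u x).eq_empty_or_nonempty with hempty | hne
  · simp [hempty]
  · rw [indicator_of_mem (by exact hne), volume_add_smul_of_ordConnected hB hB_ne hB_bdd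
      (ordConnected_transitTimes hA u x) hne (isBounded_transitTimes A u x)]

theorem volume_prod_sub_segment (hA : A.OrdConnected) (hA_open : IsOpen A) (hA_ne : A.Nonempty)
    (hA_bdd : Bornology.IsBounded A) (hB : B.OrdConnected) (hB_open : IsOpen B)
    (hB_ne : B.Nonempty) (hB_bdd : Bornology.IsBounded B) (v : ℝ × ℝ) :
    volume (A ×ˢ B - segment ℝ 0 v) =
      volume A * volume B + ENNReal.ofReal |v.1| * volume B + ENNReal.ofReal |v.2| * volume A := by
  have hopen : IsOpen (A ×ˢ B - segment ℝ 0 v) := (hA_open.prod hB_open).sub_right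
  have hproj : {x | (transitTimes A v.1 x).Nonempty}.OrdConnected := by
    rw [setOf_nonempty_transitTimes]
    exact (hA.convex.add ((convex_Icc 0 1).smul _)).ordConnected
  have hproj_volume : volume {x | (transitTimes A v.1 x).Nonempty} =
      volume A + ENNReal.ofReal |v.1| := by
    rw [setOf_nonempty_transitTimes, volume_add_smul_of_ordConnected hA hA_ne hA_bdd
      ordConnected_Icc (nonempty_Icc.2 zero_le_one) (Metric.isBounded_Icc 0 1)]
    simp
  rw [Measure.volume_eq_prod, Measure.prod_apply hopen.measurableSet]
  simp_rw [preimage_mk_prod_sub_segment, volume_add_smul_transitTimes hA hB hB_ne hB_bdd]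
  rw [lintegral_add_left (measurable_const.indicator hproj.measurableSet),
    lintegral_indicator_const hproj.measurableSet, hproj_volume,
    lintegral_const_mul' _ _ ENNReal.ofReal_ne_top,
    lintegral_volume_transitTimes hA_open.measurableSet, abs_neg]
  ring

end TransitTimes


section Segments

variable {E X : Type*} [AddCommGroup E] [Module ℝ E]

theorem segment_add_inter_nonempty_iff {K : Set E} {p v : E} :
    (segment ℝ p (p + v) ∩ K).Nonempty ↔ p ∈ K - segment ℝ 0 v := by
  have hseg : segment ℝ p (p + v) = (p + ·) '' segment ℝ 0 v := by
    simpa using (segment_translate_image ℝ p 0 v).symm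
  rw [hseg, mem_sub]
  constructor
  · rintro ⟨_, ⟨z, hz, rfl⟩, hK⟩
    exact ⟨_, hK, z, hz, add_sub_cancel_right p z⟩
  · rintro ⟨y, hy, z, hz, rfl⟩
    exact ⟨y, ⟨z, hz, sub_add_cancel y z⟩, hy⟩

theorem isOpen_setOf_segment_inter_nonempty [TopologicalSpace E] [ContinuousAdd E]
    [ContinuousConstSMul ℝ E] [TopologicalSpace X] {p q : X → E} (hp : Continuous p)
    (hq : Continuous q) {K : Set E} (hK : IsOpen K) :
    IsOpen {x | (segment ℝ (p x) (q x) ∩ K).Nonempty} := by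
  have hunion : {x | (segment ℝ (p x) (q x) ∩ K).Nonempty} =
      ⋃ t ∈ Icc (0 : ℝ) 1, (fun x ↦ (1 - t) • p x + t • q x) ⁻¹' K := by
    ext x
    simp only [segment_eq_image, image_inter_nonempty_iff, mem_iUnion, exists_prop]
    rfl
  rw [hunion]
  exact isOpen_biUnion fun t _ ↦ hK.preimage (by fun_prop)

end Segments

section Counting

theorem encard_setOf_mem_eq_tsum_indicator {ι Ω : Type*} (s : ι → Set Ω) (ω : Ω) :
    ({i | ω ∈ s i}.encard : ℝ≥0∞) = ∑' i, (s i).indicator 1 ω := by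
  rw [← ENNReal.tsum_set_one, tsum_subtype {i | ω ∈ s i} fun _ ↦ (1 : ℝ≥0∞)]
  rfl

variable {ι Ω : Type*} [Countable ι] [MeasurableSpace Ω] {s : ι → Set Ω}

theorem measurable_encard_setOf_mem (hs : ∀ i, MeasurableSet (s i)) :
    Measurable fun ω ↦ ({i | ω ∈ s i}.encard : ℝ≥0∞) := by
  simp_rw [encard_setOf_mem_eq_tsum_indicator]
  exact Measurable.tsum fun i ↦ measurable_one.indicator (hs i)

theorem lintegral_encard_setOf_mem (μ : Measure Ω) (hs : ∀ i, MeasurableSet (s i)) :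
    ∫⁻ ω, ({i | ω ∈ s i}.encard : ℝ≥0∞) ∂μ = ∑' i, μ (s i) := by
  simp_rw [encard_setOf_mem_eq_tsum_indicator]
  rw [lintegral_tsum fun i ↦ (measurable_one.indicator (hs i)).aemeasurable]
  simp_rw [lintegral_indicator_one (hs _)]

end Counting

section Unfolding

theorem tsum_measure_vadd_inter {ι G : Type*} [Countable ι] [AddGroup G] [MeasurableSpace G]
    [MeasurableAdd G] {μ : Measure G} [μ.IsAddLeftInvariant] {c : ι → G} {D : Set G}
    (hD : MeasurableSet D) (hc : ∀ x, ∃! i, c i + x ∈ D) (S : Set G) :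
    ∑' i, μ ((c i +ᵥ S) ∩ D) = μ S := by
  have hdisj : Pairwise (Function.onFun Disjoint fun i ↦ (c i + ·) ⁻¹' D) := fun i j hij ↦
    disjoint_left.2 fun x hi hj ↦ hij ((hc x).unique hi hj)
  have hcover : ⋃ i, (c i + ·) ⁻¹' D = univ :=
    eq_univ_of_forall fun x ↦ mem_iUnion.2 (hc x).exists
  have hmeas (i : ι) : MeasurableSet ((c i + ·) ⁻¹' D) := measurable_const_add (c i) hD
  calc ∑' i, μ ((c i +ᵥ S) ∩ D)
      = ∑' i, μ.restrict S ((c i + ·) ⁻¹' D) := by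
        refine tsum_congr fun i ↦ ?_
        rw [Measure.restrict_apply (hmeas i), ← measure_preimage_add μ (c i), preimage_inter,
          inter_comm]
        congr 2
        exact preimage_image_eq S (add_right_injective (c i))
    _ = μ S := by rw [← measure_iUnion hdisj hmeas, hcover, Measure.restrict_apply_univ]

theorem existsUnique_add_mem_Ico_prod_Ico {a b : ℝ} (ha : 0 < a) (hb : 0 < b) (p : ℝ × ℝ) :
    ∃! kl : ℤ × ℤ, (kl.1 * a, kl.2 * b) + p ∈ Ico 0 a ×ˢ Ico 0 b := by
  obtain ⟨k, hk, hk_unique⟩ := existsUnique_add_zsmul_mem_Ico ha p.1 0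
  obtain ⟨l, hl, hl_unique⟩ := existsUnique_add_zsmul_mem_Ico hb p.2 0
  simp only [zsmul_eq_mul, zero_add, add_comm p.1, add_comm p.2] at hk hk_unique hl hl_unique
  exact ⟨(k, l), ⟨hk, hl⟩, fun kl hkl ↦ Prod.ext (hk_unique _ hkl.1) (hl_unique _ hkl.2)⟩

end Unfolding

theorem setLIntegral_prod_prod_symm {α β γ : Type*} [MeasurableSpace α] [MeasurableSpace β]
    [MeasurableSpace γ] (μ : Measure α) (ν : Measure β) (ξ : Measure γ) [SFinite μ] [SFinite ν]
    [SFinite ξ] (s : Set α) (t : Set β) (r : Set γ) {f : α × β × γ → ℝ≥0∞} (hf : Measurable f) :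
    ∫⁻ ω in s ×ˢ t ×ˢ r, f ω ∂μ.prod (ν.prod ξ) =
      ∫⁻ z in r, ∫⁻ p in s ×ˢ t, f (p.1, p.2, z) ∂μ.prod ν ∂ξ := by
  simp_rw [← Measure.prod_restrict]
  rw [← (measurePreserving_prodAssoc _ _ _).lintegral_comp hf]
  exact lintegral_prod_symm' _ (hf.comp MeasurableEquiv.prodAssoc.measurable)

section AngularAverages

theorem integral_abs_sin_add_two_pi (t : ℝ) : ∫ θ in t..t + 2 * Real.pi, |Real.sin θ| = 4 := by
  have hperiodic : Function.Periodic (fun θ ↦ |Real.sin θ|) Real.pi := fun θ ↦ by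
    simp only [Real.sin_add_pi, abs_neg]
  have hhalf : ∫ θ in (0 : ℝ)..Real.pi, |Real.sin θ| = 2 := calc
    ∫ θ in (0 : ℝ)..Real.pi, |Real.sin θ|
      = ∫ θ in (0 : ℝ)..Real.pi, Real.sin θ := intervalIntegral.integral_congr fun θ hθ ↦ by
        rw [uIcc_of_le Real.pi_pos.le] at hθ
        exact abs_of_nonneg (Real.sin_nonneg_of_mem_Icc hθ)
    _ = 2 := by rw [integral_sin]; norm_num
  calc ∫ θ in t..t + 2 * Real.pi, |Real.sin θ|
      = ∫ θ in t..t + (2 : ℤ) • Real.pi, |Real.sin θ| := by simp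
    _ = (2 : ℤ) • ∫ θ in t..t + Real.pi, |Real.sin θ| :=
        hperiodic.intervalIntegral_add_zsmul_eq 2 t fun _ _ ↦
          Real.continuous_sin.abs.intervalIntegrable _ _
    _ = 4 := by
        rw [hperiodic.intervalIntegral_add_eq t 0, zero_add, hhalf]
        norm_num

theorem integral_abs_cos_add_two_pi (t : ℝ) : ∫ θ in t..t + 2 * Real.pi, |Real.cos θ| = 4 := by
  simp_rw [← Real.sin_add_pi_div_two]
  rw [intervalIntegral.integral_comp_add_right fun θ ↦ |Real.sin θ|, add_right_comm,
    integral_abs_sin_add_two_pi]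

theorem setLIntegral_ofReal_add_mul_abs_cos_add_mul_abs_sin {c d e : ℝ} (hc : 0 ≤ c) (hd : 0 ≤ d)
    (he : 0 ≤ e) :
    ∫⁻ θ in Ico 0 (2 * Real.pi),
        ENNReal.ofReal (c + d * |Real.cos θ| + e * |Real.sin θ|) =
      ENNReal.ofReal (2 * Real.pi * c + 4 * d + 4 * e) := by
  have hcont : Continuous fun θ ↦ c + d * |Real.cos θ| + e * |Real.sin θ| := by fun_prop
  have hcos : IntervalIntegrable (fun θ ↦ d * |Real.cos θ|) volume 0 (2 * Real.pi) :=
    Continuous.intervalIntegrable (by fun_prop) _ _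
  have hsin : IntervalIntegrable (fun θ ↦ e * |Real.sin θ|) volume 0 (2 * Real.pi) :=
    Continuous.intervalIntegrable (by fun_prop) _ _
  have hcos_integral := integral_abs_cos_add_two_pi 0
  have hsin_integral := integral_abs_sin_add_two_pi 0
  rw [zero_add] at hcos_integral hsin_integral
  rw [← ofReal_integral_eq_lintegral_ofReal
      ((hcont.integrableOn_Icc).mono_set Ico_subset_Icc_self) (.of_forall fun θ ↦ by positivity),
    integral_Ico_eq_integral_Ioc, ← intervalIntegral.integral_of_le Real.two_pi_pos.le,
    intervalIntegral.integral_add (intervalIntegrable_const.add hcos) hsin,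
    intervalIntegral.integral_add intervalIntegrable_const hcos,
    intervalIntegral.integral_const_mul, intervalIntegral.integral_const_mul,
    intervalIntegral.integral_const, hcos_integral, hsin_integral]
  congr 1
  simp only [smul_eq_mul]
  ring

end AngularAverages

section Grid

/-- The indices of the tiles of the `a × b` grid visited by the segment with endpoints `p` and `q`;
their number is counted by `visitCount`. -/
def visitedTiles (a b : ℝ) (p q : ℝ × ℝ) : Set (ℤ × ℤ) :=
  {kl | (segment ℝ p q ∩ tileInt a b kl.1 kl.2).Nonempty}

theorem coe_visitCount (a b : ℝ) (p q : ℝ × ℝ) :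
    (visitCount a b p q : ℝ) = ((visitedTiles a b p q).encard : ℝ≥0∞).toReal := by
  change (((visitedTiles a b p q).encard.toNat : ℕ) : ℝ) = _
  cases (visitedTiles a b p q).encard <;> simp

theorem isOpen_tileInt (a b : ℝ) (k l : ℤ) : IsOpen (tileInt a b k l) :=
  isOpen_Ioo.prod isOpen_Ioo

theorem tileInt_eq_vadd (a b : ℝ) (k l : ℤ) :
    tileInt a b k l = (k * a, l * b) +ᵥ (Ioo 0 a ×ˢ Ioo 0 b) := by
  ext ⟨x, y⟩
  simp only [tileInt, mem_vadd_set_iff_neg_vadd_mem, vadd_eq_add, Prod.neg_mk, Prod.mk_add_mk,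
    mem_prod, mem_Ioo]
  constructor <;> rintro ⟨⟨_, _⟩, _, _⟩ <;> refine ⟨⟨?_, ?_⟩, ?_, ?_⟩ <;> linarith

theorem measurable_encard_visitedTiles {X : Type*} [TopologicalSpace X] [MeasurableSpace X]
    [OpensMeasurableSpace X] (a b : ℝ) {p q : X → ℝ × ℝ} (hp : Continuous p)
    (hq : Continuous q) :
    Measurable fun x ↦ ((visitedTiles a b (p x) (q x)).encard : ℝ≥0∞) :=
  measurable_encard_setOf_mem fun kl ↦
    (isOpen_setOf_segment_inter_nonempty hp hq (isOpen_tileInt a b kl.1 kl.2)).measurableSet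

variable {a b : ℝ}

theorem setLIntegral_encard_visitedTiles_add (ha : 0 < a) (hb : 0 < b) (v : ℝ × ℝ) :
    ∫⁻ p in Ico 0 a ×ˢ Ico 0 b, ((visitedTiles a b p (p + v)).encard : ℝ≥0∞) =
      ENNReal.ofReal (a * b + |v.1| * b + |v.2| * a) := by
  set S := Ioo 0 a ×ˢ Ioo 0 b - segment ℝ 0 v with hS
  have htile (kl : ℤ × ℤ) : {p | (segment ℝ p (p + v) ∩ tileInt a b kl.1 kl.2).Nonempty} =
      ((kl.1 * a, kl.2 * b) : ℝ × ℝ) +ᵥ S := by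
    ext p
    rw [mem_ofPred_eq, segment_add_inter_nonempty_iff, tileInt_eq_vadd, hS, vadd_sub_assoc]
  have hmeas (kl : ℤ × ℤ) :
      MeasurableSet {p | (segment ℝ p (p + v) ∩ tileInt a b kl.1 kl.2).Nonempty} :=
    (isOpen_setOf_segment_inter_nonempty continuous_id (continuous_add_const v)
      (isOpen_tileInt a b kl.1 kl.2)).measurableSet
  calc ∫⁻ p in Ico 0 a ×ˢ Ico 0 b, ((visitedTiles a b p (p + v)).encard : ℝ≥0∞)
      = ∑' kl : ℤ × ℤ, volume ((((kl.1 * a, kl.2 * b) : ℝ × ℝ) +ᵥ S) ∩ Ico 0 a ×ˢ Ico 0 b) := by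
        refine (lintegral_encard_setOf_mem _ hmeas).trans (tsum_congr fun kl ↦ ?_)
        rw [Measure.restrict_apply (hmeas kl), htile]
    _ = volume S := tsum_measure_vadd_inter (measurableSet_Ico.prod measurableSet_Ico)
        (existsUnique_add_mem_Ico_prod_Ico ha hb) S
    _ = ENNReal.ofReal (a * b + |v.1| * b + |v.2| * a) := by
        rw [hS, volume_prod_sub_segment ordConnected_Ioo isOpen_Ioo (nonempty_Ioo.2 ha)
          (Metric.isBounded_Ioo 0 a) ordConnected_Ioo isOpen_Ioo (nonempty_Ioo.2 hb)
          (Metric.isBounded_Ioo 0 b), Real.volume_Ioo, Real.volume_Ioo, sub_zero, sub_zero,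
          ENNReal.ofReal_add (by positivity) (by positivity),
          ENNReal.ofReal_add (by positivity) (by positivity), ENNReal.ofReal_mul ha.le,
          ENNReal.ofReal_mul (abs_nonneg _), ENNReal.ofReal_mul (abs_nonneg _)]

theorem measurable_encard_visitedTiles_segPt (a b ℓ : ℝ) :
    Measurable fun ω ↦ ((visitedTiles a b (segPt1 ω) (segPt2 ℓ ω)).encard : ℝ≥0∞) :=
  measurable_encard_visitedTiles a b (by unfold segPt1; fun_prop) (by unfold segPt2; fun_prop)

theorem lintegral_encard_visitedTiles_unifP (ha : 0 < a) (hb : 0 < b) (ℓ : ℝ) :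
    ∫⁻ ω, ((visitedTiles a b (segPt1 ω) (segPt2 ℓ ω)).encard : ℝ≥0∞) ∂unifP a b =
      ENNReal.ofReal (2 * |ℓ| * (1 / a + 1 / b) / Real.pi + 1) := by
  have hposition (θ : ℝ) : ∫⁻ p in Ico 0 a ×ˢ Ico 0 b,
      ((visitedTiles a b (segPt1 (p.1, p.2, θ)) (segPt2 ℓ (p.1, p.2, θ))).encard : ℝ≥0∞) =
      ENNReal.ofReal (a * b + |ℓ| * b * |Real.cos θ| + |ℓ| * a * |Real.sin θ|) := by
    refine (setLIntegral_encard_visitedTiles_add ha hb (ℓ * Real.cos θ, ℓ * Real.sin θ)).trans ?_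
    rw [abs_mul, abs_mul, mul_right_comm, mul_right_comm |ℓ| _ a]
  rw [unifP, lintegral_smul_measure, Measure.volume_eq_prod, Measure.volume_eq_prod,
    setLIntegral_prod_prod_symm _ _ _ _ _ _ (measurable_encard_visitedTiles_segPt a b ℓ)]
  simp_rw [← Measure.volume_eq_prod, hposition]
  rw [setLIntegral_ofReal_add_mul_abs_cos_add_mul_abs_sin (by positivity) (by positivity)
      (by positivity), smul_eq_mul, ← ENNReal.ofReal_inv_of_pos (by positivity),
    ← ENNReal.ofReal_mul (by positivity)]
  congr 1
  field_simp
  ring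

end Grid

theorem stmt_17 (a b ℓ : ℝ) (ha : 0 < a) (hb : 0 < b) (hℓ : 0 < ℓ) :
    ∫ ω : ℝ × ℝ × ℝ, (visitCount a b (segPt1 ω) (segPt2 ℓ ω) : ℝ) ∂(unifP a b) =
      2 * ℓ * (1 / a + 1 / b) / Real.pi + 1 := by
  have hmeas := measurable_encard_visitedTiles_segPt a b ℓ
  have hmean := lintegral_encard_visitedTiles_unifP ha hb ℓ
  have hfinite := ae_lt_top hmeas (hmean ▸ ENNReal.ofReal_ne_top)
  simp_rw [coe_visitCount]
  rw [integral_toReal hmeas.aemeasurable hfinite, hmean, abs_of_pos hℓ,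
    ENNReal.toReal_ofReal (by positivity)]
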